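/- arXiv:2511.01022 — 8 statements merged into one kernel-verified Lean document; each statement's English description precedes it below -/
import Mathlib

section
/- In the finite-horizon risk-averse optimal stopping model, suppose that for every t: (1) the kernel Q_t is stochastically increasing, (2) the costs c_t and s_t are decreasing with respect to the componentwise order, and (3) the one-step risk functional R_t is FOSD-monotone. Then the value function v_t is decreasing on X for every t = 0, …, T. -/
/-!
Backward induction on `t`. If `v (t+1)` is decreasing, pushing the stochastically increasing
kernel forward along it reverses the dominance (`FOSDle.map_antitone`), so the FOSD-monotone
functional `R t` gives a decreasing continuation value, and sums and minima of decreasing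
functions are decreasing.

The induction must also carry measurability and boundedness of `v t`, which the measurability
hypothesis on `R t` requires. Boundedness holds because a law supported in `[-C, C]` lies between
the Dirac masses at `-C` and `C` in the dominance order, so `R t` is bounded on such laws
(`FOSDMono.abs_map_le`).
-/

open MeasureTheory

/-- A real-valued function is bounded. -/
def IsBddFun {α : Type*} (f : α → ℝ) : Prop := ∃ C : ℝ, ∀ x, |f x| ≤ C

/-- First-order stochastic dominance `μ ⪯_sd ν` on a (partially) ordered measurable space. -/
def FOSDle {α : Type*} [MeasurableSpace α] [Preorder α] (μ ν : Measure α) : Prop :=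
  ∀ f : α → ℝ, Measurable f → IsBddFun f → Monotone f → ∫ x, f x ∂μ ≤ ∫ x, f x ∂ν

/-- A risk functional on Borel probability measures on ℝ is FOSD-monotone. -/
def FOSDMono (R : Measure ℝ → ℝ) : Prop :=
  ∀ μ ν : Measure ℝ, IsProbabilityMeasure μ → IsProbabilityMeasure ν → FOSDle μ ν → R μ ≤ R ν

theorem FOSDle.map_antitone {α : Type*} [MeasurableSpace α] [Preorder α] {μ ν : Measure α}
    (h : FOSDle μ ν) {f : α → ℝ} (hf : Measurable f) (hanti : Antitone f) :
    FOSDle (Measure.map f ν) (Measure.map f μ) := by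
  rintro u hu ⟨C, hC⟩ hmono
  rw [integral_map hf.aemeasurable hu.aestronglyMeasurable,
    integral_map hf.aemeasurable hu.aestronglyMeasurable]
  have key := h (fun x => -u (f x)) (hu.comp hf).neg
    ⟨C, fun x => by simpa using hC (f x)⟩ (fun a b hab => neg_le_neg (hmono (hanti hab)))
  rw [integral_neg, integral_neg] at key
  linarith

theorem FOSDle.map_of_le {α : Type*} [MeasurableSpace α] (μ : Measure α) [IsProbabilityMeasure μ]
    {f g : α → ℝ} (hf : Measurable f) (hg : Measurable g) (hfg : ∀ x, f x ≤ g x) :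
    FOSDle (Measure.map f μ) (Measure.map g μ) := by
  rintro u hu ⟨C, hC⟩ hmono
  rw [integral_map hf.aemeasurable hu.aestronglyMeasurable,
    integral_map hg.aemeasurable hu.aestronglyMeasurable]
  have hint : ∀ k : α → ℝ, Measurable k → Integrable (fun x => u (k x)) μ := fun k hk =>
    Integrable.of_bound (hu.comp hk).aestronglyMeasurable C
      (Filter.Eventually.of_forall fun x => hC (k x))
  exact integral_mono (hint f hf) (hint g hg) fun x => hmono (hfg x)

/-- An FOSD-monotone functional is bounded, by a constant independent of `μ`, on the laws of
functions with values in `[-C, C]`: its extreme values there are attained at Dirac masses. -/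
theorem FOSDMono.abs_map_le {α : Type*} [MeasurableSpace α] {R : Measure ℝ → ℝ}
    (hR : FOSDMono R) (μ : Measure α) [IsProbabilityMeasure μ] {f : α → ℝ} (hf : Measurable f)
    {C : ℝ} (hC : ∀ x, |f x| ≤ C) :
    |R (Measure.map f μ)| ≤ max |R (Measure.dirac (-C))| |R (Measure.dirac C)| := by
  have hprob := Measure.isProbabilityMeasure_map (μ := μ) hf.aemeasurable
  have hconst : ∀ a : ℝ, Measure.map (fun _ : α => a) μ = Measure.dirac a := fun a => by
    simp [Measure.map_const]
  have h1 := FOSDle.map_of_le μ measurable_const hf (fun x => (abs_le.1 (hC x)).1)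
  have h2 := FOSDle.map_of_le μ hf measurable_const (fun x => (abs_le.1 (hC x)).2)
  rw [hconst] at h1 h2
  exact abs_le_max_abs_abs (hR _ _ inferInstance hprob h1) (hR _ _ hprob inferInstance h2)

/-- in the finite-horizon risk-averse optimal stopping model, if every kernel
`Q_t` is stochastically increasing, the costs `c_t, s_t` are decreasing (componentwise
order), and every one-step risk functional `R_t` is FOSD-monotone, then each value
function `v_t` is decreasing on `X`. -/
theorem value_function_monotone (n T : ℕ) (X : Set (Fin n → ℝ)) (hX : MeasurableSet X)
    (Q : ℕ → X → Measure X)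
    (hQprob : ∀ t, t < T → ∀ x, IsProbabilityMeasure (Q t x))
    (s : ℕ → X → ℝ) (c : ℕ → X → ℝ)
    (hs : ∀ t, t ≤ T → Measurable (s t) ∧ IsBddFun (s t))
    (hc : ∀ t, t < T → Measurable (c t) ∧ IsBddFun (c t))
    (R : ℕ → Measure ℝ → ℝ)
    (hRmeas : ∀ t, t < T → ∀ f : X → ℝ, Measurable f → IsBddFun f →
      Measurable fun x : X => R t (Measure.map f (Q t x)))
    (hQmono : ∀ t, t < T → ∀ x x' : X, x ≤ x' → FOSDle (Q t x) (Q t x'))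
    (hsdec : ∀ t, t ≤ T → Antitone (s t))
    (hcdec : ∀ t, t < T → Antitone (c t))
    (hRmono : ∀ t, t < T → FOSDMono (R t))
    (v : ℕ → X → ℝ)
    (hvT : ∀ x, v T x = s T x)
    (hrec : ∀ t, t < T → ∀ x,
      v t x = min (s t x) (c t x + R t (Measure.map (v (t + 1)) (Q t x)))) :
    ∀ t, t ≤ T → Antitone (v t) := by
  suffices H : ∀ t, t ≤ T → Measurable (v t) ∧ IsBddFun (v t) ∧ Antitone (v t) from
    fun t ht => (H t ht).2.2
  intro t ht
  induction ht using Nat.decreasingInduction with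
  | self =>
    rw [show v T = s T from funext hvT]
    exact ⟨(hs T le_rfl).1, (hs T le_rfl).2, hsdec T le_rfl⟩
  | of_succ t ht ih =>
    obtain ⟨hm, hb, ha⟩ := ih
    have hv : v t = fun x => min (s t x) (c t x + R t (Measure.map (v (t + 1)) (Q t x))) :=
      funext (hrec t ht)
    rw [hv]
    refine ⟨?_, ?_, ?_⟩
    · exact (hs t ht.le).1.min ((hc t ht).1.add (hRmeas t ht _ hm hb))
    · obtain ⟨C, hC⟩ := hb
      obtain ⟨A, hA⟩ := (hs t ht.le).2
      obtain ⟨B, hB⟩ := (hc t ht).2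
      refine ⟨max A (B + max |R t (Measure.dirac (-C))| |R t (Measure.dirac C)|), fun x => ?_⟩
      have := hQprob t ht x
      exact abs_min_le_max_abs_abs.trans (max_le_max (hA x)
        ((abs_add_le _ _).trans (add_le_add (hB x)
          ((hRmono t ht).abs_map_le (Q t x) hm hC))))
    · intro x x' hxx
      have hp := hQprob t ht x
      have hp' := hQprob t ht x'
      exact min_le_min (hsdec t ht.le hxx) (add_le_add (hcdec t ht hxx)
        (hRmono t ht _ _ (Measure.isProbabilityMeasure_map hm.aemeasurable)
          (Measure.isProbabilityMeasure_map hm.aemeasurable)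
          ((hQmono t ht x x' hxx).map_antitone hm ha)))
end

section
/- In the finite-horizon optimal stopping model with dual-representation risk mappings, suppose: (1) all costs s_t and c_t are bounded, measurable, and decreasing with respect to the componentwise order; (2) for each t < T and x ∈ X, a nonempty set A_t(x) of Borel probability measures on X is given which admits an FOSD-minimal element Q̃_t(·|x), i.e., Q̃_t(·|x) ∈ A_t(x) and Q̃_t(·|x) ⪯_sd P for every P ∈ A_t(x); (3) the kernel Q̃_t is stochastically increasing (x ⪯ x' implies Q̃_t(·|x) ⪯_sd Q̃_t(·|x')); and (4) all displayed suprema are finite and all value functions below are measurable. Define the risk-averse value functions by v_T := s_T and v_t(x) := min{ s_t(x), c_t(x) + sup_{P ∈ A_t(x)} ∫ v_{t+1} dP } for t < T, and the risk-neutral value functions by w_T := s_T and w_t(x) := min{ s_t(x), c_t(x) + ∫ w_{t+1} dQ̃_t(·|x) } for t < T. Then v_t = w_t for every t = 0, …, T, and each v_t is decreasing on X. -/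
/-! Backward induction on `t`, carrying along that `v t` is bounded. If `v (t + 1)` is bounded,
measurable and decreasing, then by `FOSDle.integral_antitone` the FOSD-minimal element `Qmin t x`
maximizes `∫ v (t + 1) dP` over `P ∈ A t x`, so the supremum in the recursion of `v` equals the
integral in the recursion of `w`. Since `Qmin t` is stochastically increasing, that integral is
decreasing in `x`, and hence so is `v t`. -/

open MeasureTheory

/-- Dominance reverses the integrals of decreasing functions. -/
theorem FOSDle.integral_antitone {α : Type*} [MeasurableSpace α] [Preorder α] {μ ν : Measure α}
    (h : FOSDle μ ν) {f : α → ℝ} (hm : Measurable f) (hb : IsBddFun f) (hf : Antitone f) :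
    ∫ x, f x ∂ν ≤ ∫ x, f x ∂μ := by
  obtain ⟨C, hC⟩ := hb
  have := h (fun x => - f x) hm.neg ⟨C, fun x => by simpa using hC x⟩
    (fun a b hab => neg_le_neg (hf hab))
  simpa [integral_neg] using this

/-- in the finite-horizon optimal stopping model with dual-representation
risk mappings, if the costs are bounded measurable and decreasing, each risk envelope
`A_t(x)` admits an FOSD-minimal element `Q̃_t(·|x)`, and the kernel `Q̃_t` is
stochastically increasing, then the risk-averse value functions `v_t` coincide with the
risk-neutral value functions `w_t` computed from the kernel `Q̃_t`, and each `v_t` is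
decreasing. -/
theorem risk_averse_eq_risk_neutral_under_minimal_element (n T : ℕ)
    (X : Set (Fin n → ℝ)) (hX : MeasurableSet X)
    (s : ℕ → X → ℝ) (c : ℕ → X → ℝ)
    (hs : ∀ t, t ≤ T → Measurable (s t) ∧ IsBddFun (s t) ∧ Antitone (s t))
    (hc : ∀ t, t < T → Measurable (c t) ∧ IsBddFun (c t) ∧ Antitone (c t))
    (A : ℕ → X → Set (Measure X))
    (hAne : ∀ t, t < T → ∀ x, (A t x).Nonempty)
    (hAprob : ∀ t, t < T → ∀ x, ∀ P ∈ A t x, IsProbabilityMeasure P)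
    (Qmin : ℕ → X → Measure X)
    (hQmem : ∀ t, t < T → ∀ x, Qmin t x ∈ A t x)
    (hQmin : ∀ t, t < T → ∀ x, ∀ P ∈ A t x, FOSDle (Qmin t x) P)
    (hQmono : ∀ t, t < T → ∀ x x' : X, x ≤ x' → FOSDle (Qmin t x) (Qmin t x'))
    (v w : ℕ → X → ℝ)
    (hvmeas : ∀ t, t ≤ T → Measurable (v t))
    (hwmeas : ∀ t, t ≤ T → Measurable (w t))
    (hfin : ∀ t, t < T → ∀ x,
      BddAbove ((fun P : Measure X => ∫ y, v (t + 1) y ∂P) '' A t x))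
    (hvT : ∀ x, v T x = s T x)
    (hwT : ∀ x, w T x = s T x)
    (hvrec : ∀ t, t < T → ∀ x, v t x =
      min (s t x) (c t x + sSup ((fun P : Measure X => ∫ y, v (t + 1) y ∂P) '' A t x)))
    (hwrec : ∀ t, t < T → ∀ x, w t x =
      min (s t x) (c t x + ∫ y, w (t + 1) y ∂(Qmin t x))) :
    ∀ t, t ≤ T → (∀ x, v t x = w t x) ∧ Antitone (v t) := by
  suffices H : ∀ t, t ≤ T → (∀ x, v t x = w t x) ∧ Antitone (v t) ∧ IsBddFun (v t) from
    fun t ht => ⟨(H t ht).1, (H t ht).2.1⟩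
  intro t ht
  induction ht using Nat.decreasingInduction with
  | self =>
    have hv : v T = s T := funext hvT
    exact ⟨fun x => by rw [hvT, hwT], hv ▸ (hs T le_rfl).2.2, hv ▸ (hs T le_rfl).2.1⟩
  | of_succ t ht ih =>
    obtain ⟨hvw, hanti, hbdd⟩ := ih
    have hmeas := hvmeas (t + 1) ht
    have hsup : ∀ x, sSup ((fun P : Measure X => ∫ y, v (t + 1) y ∂P) '' A t x)
        = ∫ y, v (t + 1) y ∂(Qmin t x) := by
      intro x
      refine IsGreatest.csSup_eq ⟨⟨_, hQmem t ht x, rfl⟩, ?_⟩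
      rintro _ ⟨P, hP, rfl⟩
      exact (hQmin t ht x P hP).integral_antitone hmeas hbdd hanti
    have hv : ∀ x, v t x = min (s t x) (c t x + ∫ y, v (t + 1) y ∂(Qmin t x)) := by
      intro x
      rw [hvrec t ht x, hsup x]
    refine ⟨fun x => ?_, fun a b hab => ?_, ?_⟩
    · rw [hv x, hwrec t ht x, funext hvw]
    · rw [hv a, hv b]
      exact min_le_min ((hs t ht.le).2.2 hab) (add_le_add ((hc t ht).2.2 hab)
        ((hQmono t ht a b hab).integral_antitone hmeas hbdd hanti))
    · obtain ⟨S, hS⟩ := (hs t ht.le).2.1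
      obtain ⟨K, hK⟩ := (hc t ht).2.1
      obtain ⟨V, hV⟩ := hbdd
      refine ⟨max S (K + V), fun x => ?_⟩
      have := hAprob t ht x _ (hQmem t ht x)
      have hI : |∫ y, v (t + 1) y ∂(Qmin t x)| ≤ V := by
        simpa using norm_integral_le_of_norm_le_const (μ := Qmin t x) (f := v (t + 1)) (C := V)
          (Filter.Eventually.of_forall hV)
      rw [hv x]
      exact abs_min_le_max_abs_abs.trans
        (max_le_max (hS x) ((abs_add_le _ _).trans (add_le_add (hK x) hI)))
end

section
/- Consider the finite-horizon risk-averse optimal stopping model on a product state space X = X1 × X2, where X1 ⊆ ℝ^{n1} carries the componentwise partial order and X2 ⊆ ℝ^{n2}. Suppose for every t: (1) each one-step risk functional R_t is FOSD-monotone; (2) the costs c_t(x1,x2) and s_t(x1,x2) are decreasing in x1 for every fixed x2; (3) the kernel disintegrates as Q_t(·|x1,x2) = ∫_{X2} ( K_t(·|x1,x2,y2) ⊗ δ_{y2} ) λ_t(dy2|x2), where λ_t(·|x2) is a probability measure on X2 depending only on x2 (the law of the second component of the next state) and K_t(·|x1,x2,y2) is a probability measure on X1 (the conditional law of the first component given the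 second equals y2); and (4) for every x2 and y2, x1 ⪯ x1' implies K_t(·|x1,x2,y2) ⪯_sd K_t(·|x1',x2,y2). Then for every t = 0, …, T, the value function v_t(x1,x2) is decreasing in x1 for every fixed x2. -/
/-!
Backward induction on `t`, carrying along that `v_t` is measurable, bounded and decreasing in the
first component. The heart of the inductive step is `fosdle_map_bind`: if `v` is decreasing in the
first component, then mixing the laws `K(·|x1, x2, y2) ⊗ δ_{y2}` over a law of `y2` that does not
depend on `x1` makes the law of `v` under `Q(·|x1, x2)` stochastically decreasing in `x1`, because
for each fixed `y2` the function `v(·, y2)` is decreasing and `K` is stochastically increasing.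
FOSD-monotonicity of the risk functional then transports this to the continuation value.
Boundedness propagates since a law carried by `[-C, C]` lies between the Dirac masses at `-C`
and `C` (`FOSDMono.abs_le`).

The inner integrals are compared through lower Lebesgue integrals of nonnegative shifts, so that
integrating over `y2` needs no measurability of `y2 ↦ ∫ g(·, y2) dK`. The
almost-everywhere measurability of the mixed family, which gives `Measure.bind` its meaning, follows
from the mixture being nonzero.
-/

open MeasureTheory

/-- `Measure.bind` takes the value `0` on a family that is not a.e. measurable. -/
lemma aemeasurable_of_bind_ne_zero {α β : Type*} [MeasurableSpace α] [MeasurableSpace β]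
    {m : Measure α} {f : α → Measure β} (h : m.bind f ≠ 0) : AEMeasurable f m := by
  by_contra hf
  exact h (by rw [Measure.bind, Measure.map_of_not_aemeasurable hf, Measure.join_zero])

lemma IsBddFun.integrable {α : Type*} [MeasurableSpace α] {f : α → ℝ} (hb : IsBddFun f)
    (hf : Measurable f) (μ : Measure α) [IsFiniteMeasure μ] : Integrable f μ := by
  obtain ⟨C, hC⟩ := hb
  exact Integrable.of_bound hf.aestronglyMeasurable C (Filter.Eventually.of_forall hC)

lemma FOSDle.lintegral_antitone {α : Type*} [MeasurableSpace α] [Preorder α] {μ ν : Measure α}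
    [IsProbabilityMeasure μ] [IsProbabilityMeasure ν] (h : FOSDle μ ν) {g : α → ℝ}
    (hg : Measurable g) (hb : IsBddFun g) (hanti : Antitone g) (hnn : ∀ x, 0 ≤ g x) :
    ∫⁻ x, ENNReal.ofReal (g x) ∂ν ≤ ∫⁻ x, ENNReal.ofReal (g x) ∂μ := by
  rw [← ofReal_integral_eq_lintegral_ofReal (hb.integrable hg ν)
      (Filter.Eventually.of_forall hnn),
    ← ofReal_integral_eq_lintegral_ofReal (hb.integrable hg μ)
      (Filter.Eventually.of_forall hnn)]
  apply ENNReal.ofReal_le_ofReal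
  obtain ⟨C, hC⟩ := hb
  have h' := h (fun x => -g x) hg.neg ⟨C, fun x => by simpa using hC x⟩
    (fun x y hxy => neg_le_neg (hanti hxy))
  simp only [integral_neg] at h'
  linarith

/-- A mixture over a common law of the second component inherits the stochastic order of the
conditional laws of the first component, tested on functions decreasing in that component. -/
lemma fosdle_map_bind {α β : Type*} [MeasurableSpace α] [Preorder α] [MeasurableSpace β]
    (l : Measure β) (k k' : β → Measure α)
    (hk : ∀ y, IsProbabilityMeasure (k y)) (hk' : ∀ y, IsProbabilityMeasure (k' y))
    (hkk : ∀ y, FOSDle (k y) (k' y))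
    (hP : IsProbabilityMeasure (l.bind fun y => (k y).prod (Measure.dirac y)))
    (hP' : IsProbabilityMeasure (l.bind fun y => (k' y).prod (Measure.dirac y)))
    {v : α × β → ℝ} (hv : Measurable v) (hanti : ∀ y, Antitone fun x => v (x, y)) :
    FOSDle (Measure.map v (l.bind fun y => (k' y).prod (Measure.dirac y)))
      (Measure.map v (l.bind fun y => (k y).prod (Measure.dirac y))) := by
  intro f hf hb hmono
  obtain ⟨C, hC⟩ := hb
  have hbd : ∀ z, 0 ≤ f z + C ∧ |f z + C| ≤ 2 * C := fun z => by
    have h1 := abs_le.mp (hC z)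
    exact ⟨by linarith, abs_le.mpr ⟨by linarith, by linarith⟩⟩
  -- `g` is the test function pulled back along `v` and shifted to be nonnegative.
  set g : α × β → ℝ := fun p => f (v p) + C with hgdef
  have hg : Measurable g := (hf.comp hv).add_const C
  have key : ∀ q : β → Measure α, (∀ y, IsProbabilityMeasure (q y)) →
      IsProbabilityMeasure (l.bind fun y => (q y).prod (Measure.dirac y)) →
      ∫⁻ p, ENNReal.ofReal (g p) ∂(l.bind fun y => (q y).prod (Measure.dirac y))
        = ∫⁻ y, ∫⁻ x, ENNReal.ofReal (g (x, y)) ∂(q y) ∂l := by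
    intro q hq hQ
    rw [Measure.lintegral_bind (aemeasurable_of_bind_ne_zero hQ.ne_zero)
      hg.ennreal_ofReal.aemeasurable]
    refine lintegral_congr fun y => ?_
    have := hq y
    rw [Measure.prod_dirac, lintegral_map hg.ennreal_ofReal (by fun_prop)]
  have hle : ∫⁻ p, ENNReal.ofReal (g p) ∂(l.bind fun y => (k' y).prod (Measure.dirac y))
      ≤ ∫⁻ p, ENNReal.ofReal (g p) ∂(l.bind fun y => (k y).prod (Measure.dirac y)) := by
    rw [key k' hk' hP', key k hk hP]
    refine lintegral_mono fun y => ?_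
    have := hk y
    have := hk' y
    exact (hkk y).lintegral_antitone (g := fun x => g (x, y)) (hg.comp (by fun_prop))
      ⟨2 * C, fun x => (hbd _).2⟩ (fun a b hab => by simpa [hgdef] using hmono (hanti y hab))
      (fun x => (hbd _).1)
  have hgb : IsBddFun g := ⟨2 * C, fun p => (hbd _).2⟩
  have hfb : IsBddFun fun p => f (v p) := ⟨C, fun p => hC _⟩
  rw [← ofReal_integral_eq_lintegral_ofReal (hgb.integrable hg _)
      (Filter.Eventually.of_forall fun p => (hbd _).1),
    ← ofReal_integral_eq_lintegral_ofReal (hgb.integrable hg _)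
      (Filter.Eventually.of_forall fun p => (hbd _).1),
    ENNReal.ofReal_le_ofReal_iff (integral_nonneg fun p => (hbd _).1)] at hle
  simp only [hgdef] at hle
  rw [integral_add (hfb.integrable (hf.comp hv) _) (integrable_const C),
    integral_add (hfb.integrable (hf.comp hv) _) (integrable_const C)] at hle
  rw [integral_map hv.aemeasurable hf.aestronglyMeasurable,
    integral_map hv.aemeasurable hf.aestronglyMeasurable]
  simpa using hle

/-- A FOSD-monotone functional is bounded on laws of `[-C, C]`-valued variables by its values at
the Dirac masses at the endpoints. -/
lemma FOSDMono.abs_le {R : Measure ℝ → ℝ} (hR : FOSDMono R) {α : Type*} [MeasurableSpace α]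
    (μ : Measure α) [IsProbabilityMeasure μ] {v : α → ℝ} (hv : Measurable v) {C : ℝ}
    (hC : ∀ x, |v x| ≤ C) :
    |R (Measure.map v μ)| ≤ |R (Measure.dirac (-C))| + |R (Measure.dirac C)| := by
  have hmap : IsProbabilityMeasure (Measure.map v μ) :=
    Measure.isProbabilityMeasure_map hv.aemeasurable
  have hlo : R (Measure.dirac (-C)) ≤ R (Measure.map v μ) := by
    refine hR _ _ inferInstance hmap fun f hf hb hmono => ?_
    have hfb : IsBddFun fun x => f (v x) := hb.imp fun D hD x => hD _
    rw [integral_dirac, integral_map hv.aemeasurable hf.aestronglyMeasurable]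
    have := integral_mono (integrable_const (f (-C))) (hfb.integrable (hf.comp hv) μ)
      (fun x => hmono (_root_.abs_le.mp (hC x)).1)
    simpa using this
  have hhi : R (Measure.map v μ) ≤ R (Measure.dirac C) := by
    refine hR _ _ hmap inferInstance fun f hf hb hmono => ?_
    have hfb : IsBddFun fun x => f (v x) := hb.imp fun D hD x => hD _
    rw [integral_dirac, integral_map hv.aemeasurable hf.aestronglyMeasurable]
    have := integral_mono (hfb.integrable (hf.comp hv) μ) (integrable_const (f C))
      (fun x => hmono (_root_.abs_le.mp (hC x)).2)
    simpa using this
  have h1 := neg_abs_le (R (Measure.dirac (-C)))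
  have h2 := le_abs_self (R (Measure.dirac C))
  have h3 := abs_nonneg (R (Measure.dirac (-C)))
  have h4 := abs_nonneg (R (Measure.dirac C))
  exact _root_.abs_le.mpr ⟨by linarith, by linarith⟩

/-- on a product state space `X = X1 × X2`, if each `R_t` is FOSD-monotone,
the costs are decreasing in `x1` for fixed `x2`, the kernel disintegrates as
`Q_t(·|x1,x2) = ∫_{X2} (K_t(·|x1,x2,y2) ⊗ δ_{y2}) λ_t(dy2|x2)` with `λ_t` depending only
on `x2`, and `K_t(·|x1,x2,y2)` is stochastically increasing in `x1`, then each value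
function `v_t(x1,x2)` is decreasing in `x1` for every fixed `x2`. -/
theorem value_function_monotone_in_first_component (n1 n2 T : ℕ)
    (X1 : Set (Fin n1 → ℝ)) (X2 : Set (Fin n2 → ℝ))
    (hX1 : MeasurableSet X1) (hX2 : MeasurableSet X2)
    (Q : ℕ → ↥X1 × ↥X2 → Measure (↥X1 × ↥X2))
    (hQprob : ∀ t, t < T → ∀ x, IsProbabilityMeasure (Q t x))
    (s : ℕ → ↥X1 × ↥X2 → ℝ) (c : ℕ → ↥X1 × ↥X2 → ℝ)
    (hs : ∀ t, t ≤ T → Measurable (s t) ∧ IsBddFun (s t))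
    (hc : ∀ t, t < T → Measurable (c t) ∧ IsBddFun (c t))
    (R : ℕ → Measure ℝ → ℝ)
    (hRmono : ∀ t, t < T → FOSDMono (R t))
    (hRmeas : ∀ t, t < T → ∀ f : ↥X1 × ↥X2 → ℝ, Measurable f → IsBddFun f →
      Measurable fun x : ↥X1 × ↥X2 => R t (Measure.map f (Q t x)))
    (hsdec : ∀ t, t ≤ T → ∀ x2 : X2, Antitone fun x1 : X1 => s t (x1, x2))
    (hcdec : ∀ t, t < T → ∀ x2 : X2, Antitone fun x1 : X1 => c t (x1, x2))
    (lam : ℕ → ↥X2 → Measure ↥X2)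
    (K : ℕ → ↥X1 → ↥X2 → ↥X2 → Measure ↥X1)
    (hlamprob : ∀ t, t < T → ∀ x2, IsProbabilityMeasure (lam t x2))
    (hKprob : ∀ t, t < T → ∀ x1 x2 y2, IsProbabilityMeasure (K t x1 x2 y2))
    (hdisint : ∀ t, t < T → ∀ x : ↥X1 × ↥X2,
      Q t x = (lam t x.2).bind fun y2 => (K t x.1 x.2 y2).prod (Measure.dirac y2))
    (hKmono : ∀ t, t < T → ∀ (x2 y2 : X2) (x1 x1' : X1), x1 ≤ x1' →
      FOSDle (K t x1 x2 y2) (K t x1' x2 y2))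
    (v : ℕ → ↥X1 × ↥X2 → ℝ)
    (hvT : ∀ x, v T x = s T x)
    (hrec : ∀ t, t < T → ∀ x,
      v t x = min (s t x) (c t x + R t (Measure.map (v (t + 1)) (Q t x)))) :
    ∀ t, t ≤ T → ∀ x2 : X2, Antitone fun x1 : X1 => v t (x1, x2) := by
  suffices H : ∀ t, t ≤ T → Measurable (v t) ∧ IsBddFun (v t) ∧
      ∀ x2 : X2, Antitone fun x1 : X1 => v t (x1, x2) from fun t ht => (H t ht).2.2
  intro t ht
  induction ht using Nat.decreasingInduction with
  | self =>
    rw [show v T = s T from funext hvT]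
    exact ⟨(hs T le_rfl).1, (hs T le_rfl).2, hsdec T le_rfl⟩
  | of_succ t ht ih =>
    obtain ⟨hvm, hvb, hva⟩ := ih
    obtain ⟨hsm, S, hS⟩ := hs t ht.le
    obtain ⟨hcm, D, hD⟩ := hc t ht
    refine ⟨?_, ?_, ?_⟩
    · rw [show v t = _ from funext (hrec t ht)]
      exact hsm.min (hcm.add (hRmeas t ht _ hvm hvb))
    · obtain ⟨C, hC⟩ := hvb
      refine ⟨max S (D + (|R t (Measure.dirac (-C))| + |R t (Measure.dirac C)|)), fun x => ?_⟩
      have := hQprob t ht x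
      rw [hrec t ht x]
      exact abs_min_le_max_abs_abs.trans (max_le_max (hS x)
        ((abs_add_le _ _).trans (add_le_add (hD x) ((hRmono t ht).abs_le (Q t x) hvm hC))))
    · intro x2 a b hab
      have hPa := hQprob t ht (a, x2)
      have hPb := hQprob t ht (b, x2)
      have hR : R t (Measure.map (v (t + 1)) (Q t (b, x2)))
          ≤ R t (Measure.map (v (t + 1)) (Q t (a, x2))) := by
        refine hRmono t ht _ _ (Measure.isProbabilityMeasure_map hvm.aemeasurable)
          (Measure.isProbabilityMeasure_map hvm.aemeasurable) ?_
        rw [hdisint t ht] at hPa hPb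
        rw [hdisint t ht, hdisint t ht]
        exact fosdle_map_bind (lam t x2) (K t a x2) (K t b x2) (hKprob t ht a x2)
          (hKprob t ht b x2) (fun y => hKmono t ht x2 y a b hab) hPa hPb hvm hva
      simp only [hrec t ht]
      exact min_le_min (hsdec t ht.le x2 hab) (add_le_add (hcdec t ht x2 hab) hR)
end

section
/- Let X and Y be real-valued random variables on a probability space (Ω, F, P) with cumulative distribution functions F_X and F_Y and left-continuous quantile functions F_X^{-1}(u) := inf{z ∈ ℝ : F_X(z) ≥ u}, F_Y^{-1}(u) := inf{z ∈ ℝ : F_Y(z) ≥ u}. Then: (i) if X and Y are comonotone, then (X, Y) has the same joint law as (F_X^{-1}(U), F_Y^{-1}(U)), where U is uniformly distributed on (0,1); (ii) conversely, for any random variable Z and any increasing functions f, g : ℝ → ℝ, the pair (f(Z), g(Z)) is comonotone. In particular, X and Y are comonotone up to equality in distribution if and only if there exist a random variable Z and increasing functions f, g : ℝ → ℝ with (X, Y) equal in distribution to (f(Z), g(Z)). -/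
/-!
For `0 < u < 1` the quantile function and the distribution function form a Galois connection,
`F⁻¹(u) ≤ a ↔ u ≤ F(a)` (`quantile_cdfOf_le_iff`), so the quantile coupling gives the quadrant
`(-∞, a] × (-∞, b]` mass `min (F_X a) (F_Y b)`. If `X` and `Y` are comonotone, the events `{X ≤ a}`
and `{Y ≤ b}` are nested, so the law of `(X, Y)` gives the quadrant the same mass; quadrants form a
π-system generating the Borel sets of the plane, which proves (i).

For the existence of a common monotone representation, take `Z = X + Y`. Comonotonicity makes `X`
a monotone 1-Lipschitz function of `Z` on the range of `Z`, and a McShane-type infimum extends it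
to a monotone function on all of `ℝ` (`Comonotone.exists_monotone_comp_add`). The quantile functions
themselves would not do here, since by the convention `sInf = 0` for degenerate sets they need
not be monotone on all of `ℝ`.
-/

open MeasureTheory

/-- Real-valued random variables are comonotone. -/
def Comonotone {Ω : Type*} (X Y : Ω → ℝ) : Prop :=
  ∀ ω ω' : Ω, 0 ≤ (X ω - X ω') * (Y ω - Y ω')

/-- The cumulative distribution function of `X` under `P`. -/
noncomputable def cdfOf {Ω : Type*} [MeasurableSpace Ω] (P : Measure Ω) (X : Ω → ℝ) :
    ℝ → ℝ :=
  fun z => (P (X ⁻¹' Set.Iic z)).toReal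

/-- The left-continuous quantile function `F^{-1}(u) = inf {z | F z ≥ u}`. -/
noncomputable def quantile (F : ℝ → ℝ) (u : ℝ) : ℝ := sInf {z : ℝ | u ≤ F z}

open Filter Topology

lemma cdfOf_eq_cdf {Ω : Type*} [MeasurableSpace Ω] (P : Measure Ω) [IsProbabilityMeasure P]
    {X : Ω → ℝ} (hX : Measurable X) (z : ℝ) :
    cdfOf P X z = ProbabilityTheory.cdf (P.map X) z := by
  have : IsProbabilityMeasure (P.map X) := Measure.isProbabilityMeasure_map hX.aemeasurable
  rw [ProbabilityTheory.cdf_eq_real, Measure.real, Measure.map_apply hX measurableSet_Iic]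
  rfl

/-- The superlevel sets `{z | u ≤ F z}` are nonempty and bounded below for `0 < u < 1`, so that the
real infimum defining the quantile is not a junk value. -/
lemma quantile_set_nonempty_bddBelow {Ω : Type*} [MeasurableSpace Ω] (P : Measure Ω)
    [IsProbabilityMeasure P] {X : Ω → ℝ} (hX : Measurable X) {u : ℝ} (hu : u ∈ Set.Ioo (0 : ℝ) 1) :
    {z : ℝ | u ≤ cdfOf P X z}.Nonempty ∧ BddBelow {z : ℝ | u ≤ cdfOf P X z} := by
  simp only [cdfOf_eq_cdf P hX]
  constructor
  · obtain ⟨z, hz⟩ := ((ProbabilityTheory.tendsto_cdf_atTop (P.map X)).eventually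
      (lt_mem_nhds hu.2)).exists
    exact ⟨z, hz.le⟩
  · obtain ⟨z, hz⟩ := ((ProbabilityTheory.tendsto_cdf_atBot (P.map X)).eventually
      (gt_mem_nhds hu.1)).exists
    refine ⟨z, fun w hw => ?_⟩
    by_contra! h
    exact absurd (hw.trans (ProbabilityTheory.monotone_cdf (P.map X) h.le)) (not_le.2 hz)

/-- The Galois connection between quantile and distribution function; the forward direction is
where right-continuity of the distribution function enters. -/
lemma quantile_cdfOf_le_iff {Ω : Type*} [MeasurableSpace Ω] (P : Measure Ω)
    [IsProbabilityMeasure P] {X : Ω → ℝ} (hX : Measurable X) {u : ℝ} (hu : u ∈ Set.Ioo (0 : ℝ) 1)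
    (a : ℝ) : quantile (cdfOf P X) u ≤ a ↔ u ≤ cdfOf P X a := by
  obtain ⟨hne, hbdd⟩ := quantile_set_nonempty_bddBelow P hX hu
  refine ⟨fun h => ?_, fun h => csInf_le hbdd h⟩
  have hright : Tendsto (ProbabilityTheory.cdf (P.map X)) (𝓝[>] a)
      (𝓝 (ProbabilityTheory.cdf (P.map X) a)) :=
    ((ProbabilityTheory.cdf (P.map X)).right_continuous a).mono_left
      (nhdsWithin_mono _ Set.Ioi_subset_Ici_self)
  rw [cdfOf_eq_cdf P hX]
  refine ge_of_tendsto hright (eventually_mem_nhdsWithin.mono fun b hb => ?_)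
  obtain ⟨z, hz, hzb⟩ := exists_lt_of_csInf_lt hne (lt_of_le_of_lt h hb)
  rw [Set.mem_ofPred_eq, cdfOf_eq_cdf P hX] at hz
  exact hz.trans (ProbabilityTheory.monotone_cdf _ hzb.le)

lemma aemeasurable_quantile_cdfOf {Ω : Type*} [MeasurableSpace Ω] (P : Measure Ω)
    [IsProbabilityMeasure P] {X : Ω → ℝ} (hX : Measurable X) :
    AEMeasurable (quantile (cdfOf P X)) (volume.restrict (Set.Ioo (0 : ℝ) 1)) := by
  refine aemeasurable_restrict_of_monotoneOn measurableSet_Ioo fun u hu v hv huv => ?_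
  rw [quantile_cdfOf_le_iff P hX hu]
  exact huv.trans ((quantile_cdfOf_le_iff P hX hv _).1 le_rfl)

/-- A probability measure on the plane is determined by its joint distribution function. -/
lemma ext_of_Iic_prod_Iic {μ ν : Measure (ℝ × ℝ)} [IsProbabilityMeasure μ] [IsProbabilityMeasure ν]
    (h : ∀ a b : ℝ, μ (Set.Iic a ×ˢ Set.Iic b) = ν (Set.Iic a ×ˢ Set.Iic b)) : μ = ν := by
  have hspan : IsCountablySpanning (Set.range (Set.Iic : ℝ → Set ℝ)) :=
    ⟨fun n : ℕ => Set.Iic (n : ℝ), fun n => ⟨n, rfl⟩, by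
      ext x
      simpa using exists_nat_ge x⟩
  have hgen : MeasurableSpace.generateFrom (Set.range (Set.Iic : ℝ → Set ℝ)) =
      (inferInstance : MeasurableSpace ℝ) :=
    (borel_eq_generateFrom_Iic ℝ).symm.trans (BorelSpace.measurable_eq (α := ℝ)).symm
  have hpi : IsPiSystem (Set.range (Set.Iic : ℝ → Set ℝ)) := by
    rintro _ ⟨a, rfl⟩ _ ⟨b, rfl⟩ _
    exact ⟨min a b, Set.Iic_inter_Iic.symm⟩
  refine ext_of_generate_finite _ (generateFrom_eq_prod hgen hgen hspan hspan).symm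
    (hpi.prod hpi) ?_ (by simp)
  rintro _ ⟨_, ⟨a, rfl⟩, _, ⟨b, rfl⟩, rfl⟩
  exact h a b

/-- For comonotone variables the lower level sets are nested. -/
lemma Comonotone.measure_inter {Ω : Type*} [MeasurableSpace Ω] (P : Measure Ω) {X Y : Ω → ℝ}
    (h : Comonotone X Y) (a b : ℝ) :
    P (X ⁻¹' Set.Iic a ∩ Y ⁻¹' Set.Iic b) = min (P (X ⁻¹' Set.Iic a)) (P (Y ⁻¹' Set.Iic b)) := by
  have hnest : X ⁻¹' Set.Iic a ⊆ Y ⁻¹' Set.Iic b ∨ Y ⁻¹' Set.Iic b ⊆ X ⁻¹' Set.Iic a := by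
    by_contra! hcon
    obtain ⟨ω, hω, hω'⟩ := Set.not_subset.1 hcon.1
    obtain ⟨τ, hτ, hτ'⟩ := Set.not_subset.1 hcon.2
    simp only [Set.mem_preimage, Set.mem_Iic, not_le] at hω hω' hτ hτ'
    nlinarith [h ω τ]
  rcases hnest with hs | hs
  · rw [Set.inter_eq_left.2 hs, min_eq_left (measure_mono hs)]
  · rw [Set.inter_eq_right.2 hs, min_eq_right (measure_mono hs)]

lemma volume_inter_Iic_Ioo {m : ℝ} (hm : m ≤ 1) :
    volume (Set.Ioo (0 : ℝ) 1 ∩ Set.Iic m) = ENNReal.ofReal m := by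
  refine le_antisymm ?_ ?_
  · calc volume (Set.Ioo (0 : ℝ) 1 ∩ Set.Iic m) ≤ volume (Set.Icc 0 m) :=
          measure_mono fun x hx => ⟨hx.1.1.le, hx.2⟩
      _ = ENNReal.ofReal m := by simp
  · calc ENNReal.ofReal m = volume (Set.Ioo 0 m) := by simp
      _ ≤ volume (Set.Ioo (0 : ℝ) 1 ∩ Set.Iic m) :=
          measure_mono fun x hx => ⟨⟨hx.1, hx.2.trans_le hm⟩, hx.2.le⟩

lemma Comonotone.map_eq_quantile_coupling {Ω : Type*} [MeasurableSpace Ω] (P : Measure Ω)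
    [IsProbabilityMeasure P] {X Y : Ω → ℝ} (hX : Measurable X) (hY : Measurable Y)
    (h : Comonotone X Y) :
    Measure.map (fun ω => (X ω, Y ω)) P =
      Measure.map (fun u : ℝ => (quantile (cdfOf P X) u, quantile (cdfOf P Y) u))
        (volume.restrict (Set.Ioo (0 : ℝ) 1)) := by
  have hQ : AEMeasurable (fun u : ℝ => (quantile (cdfOf P X) u, quantile (cdfOf P Y) u))
      (volume.restrict (Set.Ioo (0 : ℝ) 1)) :=
    (aemeasurable_quantile_cdfOf P hX).prodMk (aemeasurable_quantile_cdfOf P hY)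
  have : IsProbabilityMeasure (volume.restrict (Set.Ioo (0 : ℝ) 1)) := ⟨by simp⟩
  have := Measure.isProbabilityMeasure_map hQ
  have := Measure.isProbabilityMeasure_map (μ := P) (hX.prodMk hY).aemeasurable
  refine ext_of_Iic_prod_Iic fun a b => ?_
  have hmeas : MeasurableSet (Set.Iic a ×ˢ Set.Iic b) := measurableSet_Iic.prod measurableSet_Iic
  have hset : (fun u : ℝ => (quantile (cdfOf P X) u, quantile (cdfOf P Y) u)) ⁻¹'
        (Set.Iic a ×ˢ Set.Iic b) ∩ Set.Ioo 0 1 =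
      Set.Ioo (0 : ℝ) 1 ∩ Set.Iic (min (cdfOf P X a) (cdfOf P Y b)) := by
    ext u
    simp only [Set.mem_inter_iff, Set.mem_preimage, Set.mem_prod, Set.mem_Iic, le_min_iff]
    rw [and_comm]
    refine and_congr_right fun hu => ?_
    rw [quantile_cdfOf_le_iff P hX hu, quantile_cdfOf_le_iff P hY hu]
  have hle : min (cdfOf P X a) (cdfOf P Y b) ≤ 1 :=
    (min_le_left _ _).trans (measureReal_le_one (μ := P))
  rw [Measure.map_apply (hX.prodMk hY) hmeas, Measure.map_apply_of_aemeasurable hQ hmeas,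
    Measure.restrict_apply' measurableSet_Ioo, hset, volume_inter_Iic_Ioo hle, Set.mk_preimage_prod,
    h.measure_inter, ENNReal.ofReal_min]
  simp [cdfOf]

lemma Comonotone.symm {Ω : Type*} {X Y : Ω → ℝ} (h : Comonotone X Y) : Comonotone Y X :=
  fun ω τ => by rw [mul_comm]; exact h ω τ

/-- The inequality `X ω ≤ X τ + (Z ω - Z τ)⁺` for `Z = X + Y`, expressing that `X` is a monotone
1-Lipschitz function of `Z` on the range of `Z`. -/
lemma Comonotone.le_add_max {Ω : Type*} {X Y : Ω → ℝ} (h : Comonotone X Y) (ω τ : Ω) :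
    X ω ≤ X τ + max (X ω + Y ω - (X τ + Y τ)) 0 := by
  rcases le_total (X ω) (X τ) with hx | hx
  · linarith [le_max_right (X ω + Y ω - (X τ + Y τ)) 0]
  · rcases hx.eq_or_lt with hx | hx
    · linarith [le_max_right (X ω + Y ω - (X τ + Y τ)) 0]
    · have hy : 0 ≤ Y ω - Y τ := nonneg_of_mul_nonneg_right (h ω τ) (by linarith)
      linarith [le_max_left (X ω + Y ω - (X τ + Y τ)) 0]

lemma Comonotone.exists_monotone_comp_add {Ω : Type*} [Nonempty Ω] {X Y : Ω → ℝ}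
    (h : Comonotone X Y) : ∃ f : ℝ → ℝ, Monotone f ∧ ∀ ω, f (X ω + Y ω) = X ω := by
  have hbdd : ∀ z : ℝ, BddBelow (Set.range fun ω => X ω + max (z - (X ω + Y ω)) 0) := by
    intro z
    obtain ⟨ω₀⟩ := ‹Nonempty Ω›
    refine ⟨X ω₀ - |X ω₀ + Y ω₀ - z|, ?_⟩
    rintro _ ⟨ω, rfl⟩
    have h₁ := h.le_add_max ω₀ ω
    have h₂ : max (X ω₀ + Y ω₀ - (X ω + Y ω)) 0 ≤
        max (z - (X ω + Y ω)) 0 + |X ω₀ + Y ω₀ - z| := by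
      refine max_le ?_ (by positivity)
      linarith [le_max_left (z - (X ω + Y ω)) 0, le_abs_self (X ω₀ + Y ω₀ - z)]
    dsimp only
    linarith
  refine ⟨fun z => ⨅ ω, (X ω + max (z - (X ω + Y ω)) 0), fun z w hzw => ?_, fun ω => ?_⟩
  · exact ciInf_mono (hbdd z) fun ω => by gcongr
  · refine le_antisymm ((ciInf_le (hbdd _) ω).trans (by simp)) (le_ciInf fun τ => ?_)
    exact h.le_add_max ω τ

lemma Monotone.comonotone_comp {Ω : Type*} {f g : ℝ → ℝ} (hf : Monotone f) (hg : Monotone g)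
    (Z : Ω → ℝ) : Comonotone (fun ω => f (Z ω)) (fun ω => g (Z ω)) := by
  intro ω τ
  rcases le_total (Z ω) (Z τ) with h | h
  · exact mul_nonneg_of_nonpos_of_nonpos (sub_nonpos.2 (hf h)) (sub_nonpos.2 (hg h))
  · exact mul_nonneg (sub_nonneg.2 (hf h)) (sub_nonneg.2 (hg h))

/-- (i) comonotone random variables have the joint law of the quantile
coupling `(F_X^{-1}(U), F_Y^{-1}(U))` with `U` uniform on `(0,1)`; (ii) increasing
functions of a common random variable are comonotone; (iii) hence `X, Y` are comonotone
up to equality in distribution iff `(X, Y)` is distributed as `(f(Z), g(Z))` for some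
random variable `Z` and increasing `f, g`. -/
theorem comonotone_iff_common_monotone_rep {Ω : Type} [MeasurableSpace Ω]
    (P : Measure Ω) (hP : IsProbabilityMeasure P)
    (X Y : Ω → ℝ) (hX : Measurable X) (hY : Measurable Y) :
    (Comonotone X Y →
      Measure.map (fun ω => (X ω, Y ω)) P =
        Measure.map (fun u : ℝ => (quantile (cdfOf P X) u, quantile (cdfOf P Y) u))
          (volume.restrict (Set.Ioo (0 : ℝ) 1)))
    ∧ (∀ (Z : Ω → ℝ) (f g : ℝ → ℝ), Monotone f → Monotone g →
        Comonotone (fun ω => f (Z ω)) (fun ω => g (Z ω)))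
    ∧ ((∃ (Ω' : Type) (_ : MeasurableSpace Ω') (P' : Measure Ω') (X' Y' : Ω' → ℝ),
          IsProbabilityMeasure P' ∧ Measurable X' ∧ Measurable Y' ∧ Comonotone X' Y' ∧
          Measure.map (fun ω => (X' ω, Y' ω)) P' = Measure.map (fun ω => (X ω, Y ω)) P)
        ↔
        (∃ (Ω' : Type) (_ : MeasurableSpace Ω') (P' : Measure Ω') (Z : Ω' → ℝ)
            (f g : ℝ → ℝ),
          IsProbabilityMeasure P' ∧ Measurable Z ∧ Monotone f ∧ Monotone g ∧
          Measure.map (fun ω => (f (Z ω), g (Z ω))) P' =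
            Measure.map (fun ω => (X ω, Y ω)) P)) := by
  refine ⟨fun h => h.map_eq_quantile_coupling P hX hY,
    fun Z f g hf hg => hf.comonotone_comp hg Z, ?_, ?_⟩
  · rintro ⟨Ω', _, P', X', Y', hP', hX', hY', hc, hmap⟩
    have : Nonempty Ω' := nonempty_of_isProbabilityMeasure P'
    obtain ⟨f, hf, hfX⟩ := hc.exists_monotone_comp_add
    obtain ⟨g, hg, hgY⟩ := hc.symm.exists_monotone_comp_add
    refine ⟨Ω', _, P', fun ω => X' ω + Y' ω, f, g, hP', hX'.add hY', hf, hg, ?_⟩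
    have hgY' : ∀ ω, g (X' ω + Y' ω) = Y' ω := fun ω => by rw [add_comm, hgY]
    simpa only [hfX, hgY'] using hmap
  · rintro ⟨Ω', _, P', Z, f, g, hP', hZ, hf, hg, hmap⟩
    exact ⟨Ω', _, P', fun ω => f (Z ω), fun ω => g (Z ω), hP', hf.measurable.comp hZ,
      hg.measurable.comp hZ, hf.comonotone_comp hg Z, hmap⟩
end

section
/- In the finite-horizon risk-averse optimal stopping model, suppose for every t < T: (1) the one-step risk functional R_t is FOSD-monotone and comonotone-additive, i.e., ρ_μ(f+g) = ρ_μ(f) + ρ_μ(g) whenever f and g are comonotone on a set of full μ-measure; (2) the kernel Q_t is stochastically increasing; (3) for every x ∈ X there is a measurable set S_{t,x} ⊆ X with Q_t(S_{t,x}|x) = 1 such that any two points of S_{t,x} are comparable in the componentwise order (equivalently, the next-state vector is comonotone); and (4) the one-step loss M_t and the stopping cost s_t are decreasing on X. Then the continuation loss L_t is decreasing on X for every t < T; consequently, for each t and each coordinate i there exists a control limit optimal policy in the i-th dimension. -/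
/-!
Write `v_{t+1} = s_{t+1} + min(0, L_{t+1})`. If `L_{t+1}` is decreasing, both summands are
decreasing, hence comonotone on the chain carrying `Q_t(·|x)`, so comonotone additivity gives
`L_t(x) = M_t(x) + ρ_{Q_t(·|x)}(min(0, L_{t+1}))`. The last term is decreasing in `x` because
`Q_t` is stochastically increasing and `R_t` is FOSD-monotone (`risk_antitone`). Backward
induction from `L_{T-1} = M_{T-1}` shows that every `L_t` is decreasing. Boundedness of the value functions, required to invoke comonotone additivity, comes from
comparing `R_t` with its values at point masses (`risk_bdd`). The control limit is the infimum of
the `i`-th coordinates, along the line through `x0` in direction `i`, at which `L_t ≤ 0`.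
-/

open MeasureTheory

/-- `R` is comonotone-additive: `ρ_μ(f+g) = ρ_μ(f) + ρ_μ(g)` whenever `f, g` are
comonotone on a set of full `μ`-measure. -/
def ComonotoneAdd (α : Type*) [MeasurableSpace α] (R : Measure ℝ → ℝ) : Prop :=
  ∀ μ : Measure α, IsProbabilityMeasure μ → ∀ f g : α → ℝ,
    Measurable f → Measurable g → IsBddFun f → IsBddFun g →
    ∀ S : Set α, MeasurableSet S → μ S = 1 →
    (∀ y ∈ S, ∀ y' ∈ S, 0 ≤ (f y - f y') * (g y - g y')) →
    R (Measure.map (fun x => f x + g x) μ) = R (Measure.map f μ) + R (Measure.map g μ)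

/-- `x` and `x'` agree in all coordinates except possibly the `i`-th. -/
def SameOff {n : ℕ} {X : Set (Fin n → ℝ)} (i : Fin n) (x x' : X) : Prop :=
  ∀ j : Fin n, j ≠ i → (x : Fin n → ℝ) j = (x' : Fin n → ℝ) j

/-- The pushforward of a stochastically larger law under a decreasing function is FOSD-smaller,
so its risk is smaller. -/
theorem risk_antitone {α : Type*} [MeasurableSpace α] [Preorder α] {R : Measure ℝ → ℝ}
    (hR : FOSDMono R) {μ ν : Measure α} [IsProbabilityMeasure μ] [IsProbabilityMeasure ν]
    (h : FOSDle μ ν) {f : α → ℝ} (hf : Measurable f) (hfa : Antitone f) :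
    R (Measure.map f ν) ≤ R (Measure.map f μ) := by
  refine hR _ _ (Measure.isProbabilityMeasure_map hf.aemeasurable)
    (Measure.isProbabilityMeasure_map hf.aemeasurable) ?_
  intro u hu ⟨C, hC⟩ hum
  rw [integral_map hf.aemeasurable hu.aestronglyMeasurable,
    integral_map hf.aemeasurable hu.aestronglyMeasurable]
  have key := h (fun x => -u (f x)) (hu.comp hf).neg ⟨C, fun x => by simpa using hC (f x)⟩
    (fun a b hab => neg_le_neg (hum (hfa hab)))
  simp only [integral_neg] at key
  linarith

/-- A law on `[-C, C]` lies between the point masses at `-C` and `C` in the FOSD order, which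
bounds its risk uniformly. -/
theorem risk_bdd {α : Type*} [MeasurableSpace α] {R : Measure ℝ → ℝ} (hR : FOSDMono R)
    (μ : Measure α) [IsProbabilityMeasure μ] {f : α → ℝ} (hf : Measurable f) {C : ℝ}
    (hC : ∀ x, |f x| ≤ C) :
    R (Measure.dirac (-C)) ≤ R (Measure.map f μ) ∧
      R (Measure.map f μ) ≤ R (Measure.dirac C) := by
  have hp := Measure.isProbabilityMeasure_map (μ := μ) hf.aemeasurable
  have hint : ∀ u : ℝ → ℝ, Measurable u → IsBddFun u → Integrable (fun x => u (f x)) μ := by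
    rintro u hu ⟨K, hK⟩
    exact Integrable.of_bound (hu.comp hf).aestronglyMeasurable K
      (Filter.Eventually.of_forall fun x => hK (f x))
  constructor
  · refine hR _ _ inferInstance hp fun u hu hub hum => ?_
    rw [integral_dirac, integral_map hf.aemeasurable hu.aestronglyMeasurable]
    have := integral_mono (integrable_const (u (-C))) (hint u hu hub)
      (fun x => hum (abs_le.1 (hC x)).1)
    simpa using this
  · refine hR _ _ hp inferInstance fun u hu hub hum => ?_
    rw [integral_dirac, integral_map hf.aemeasurable hu.aestronglyMeasurable]
    have := integral_mono (hint u hu hub) (integrable_const (u C))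
      (fun x => hum (abs_le.1 (hC x)).2)
    simpa using this

/-- if each `R_t` is FOSD-monotone and comonotone-additive, each kernel
`Q_t` is stochastically increasing with comonotone next-state vector (its mass is
carried by a chain of the componentwise order), and `M_t`, `s_t` are decreasing, then
the continuation loss `L_t` is decreasing for every `t < T`; consequently, for each `t`
and coordinate `i`, a control limit optimal policy in the `i`-th dimension exists. -/
theorem comonotone_case_control_limit (n T : ℕ) (X : Set (Fin n → ℝ))
    (hX : MeasurableSet X)
    (Q : ℕ → X → Measure X)
    (hQprob : ∀ t, t < T → ∀ x, IsProbabilityMeasure (Q t x))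
    (s : ℕ → X → ℝ) (c : ℕ → X → ℝ)
    (hs : ∀ t, t ≤ T → Measurable (s t) ∧ IsBddFun (s t))
    (hc : ∀ t, t < T → Measurable (c t) ∧ IsBddFun (c t))
    (R : ℕ → Measure ℝ → ℝ)
    (hRmeas : ∀ t, t < T → ∀ f : X → ℝ, Measurable f → IsBddFun f →
      Measurable fun x : X => R t (Measure.map f (Q t x)))
    (hRmono : ∀ t, t < T → FOSDMono (R t))
    (hRcomadd : ∀ t, t < T → ComonotoneAdd ↥X (R t))
    (hQmono : ∀ t, t < T → ∀ x x' : X, x ≤ x' → FOSDle (Q t x) (Q t x'))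
    (hchain : ∀ t, t < T → ∀ x : X, ∃ S : Set X, MeasurableSet S ∧ Q t x S = 1 ∧
      ∀ y ∈ S, ∀ y' ∈ S, y ≤ y' ∨ y' ≤ y)
    (v : ℕ → X → ℝ)
    (hvT : ∀ x, v T x = s T x)
    (hrec : ∀ t, t < T → ∀ x,
      v t x = min (s t x) (c t x + R t (Measure.map (v (t + 1)) (Q t x))))
    (L M : ℕ → X → ℝ)
    (hL : ∀ t, t < T → ∀ x,
      L t x = R t (Measure.map (v (t + 1)) (Q t x)) + c t x - s t x)
    (hM : ∀ t, t < T → ∀ x,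
      M t x = R t (Measure.map (s (t + 1)) (Q t x)) + c t x - s t x)
    (hMdec : ∀ t, t < T → Antitone (M t))
    (hsdec : ∀ t, t < T → Antitone (s t)) :
    (∀ t, t < T → Antitone (L t)) ∧
    (∀ t, t < T → ∀ i : Fin n, ∀ x0 : X, ∃ xb : EReal, ∀ x : X, SameOff i x x0 →
      (xb < ((x : Fin n → ℝ) i : EReal) → L t x ≤ 0) ∧
      (((x : Fin n → ℝ) i : EReal) < xb → 0 < L t x)) := by
  have hv : ∀ k t, t + k = T → Measurable (v t) ∧ IsBddFun (v t) := by
    intro k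
    induction k with
    | zero =>
      intro t ht
      obtain rfl : t = T := by omega
      rw [show v t = s t from funext hvT]
      exact hs t le_rfl
    | succ k ih =>
      intro t ht
      have htT : t < T := by omega
      obtain ⟨hm, C, hC⟩ := ih (t + 1) (by omega)
      obtain ⟨hsm, A, hA⟩ := hs t htT.le
      obtain ⟨hcm, B, hB⟩ := hc t htT
      rw [show v t = _ from funext (hrec t htT)]
      refine ⟨hsm.min (hcm.add (hRmeas t htT _ hm ⟨C, hC⟩)),
        A + B + |R t (Measure.dirac (-C))| + |R t (Measure.dirac C)|, fun x => ?_⟩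
      have := hQprob t htT x
      obtain ⟨h1, h2⟩ := risk_bdd (hRmono t htT) (Q t x) hm hC
      have hAx := abs_le.1 (hA x)
      have hBx := abs_le.1 (hB x)
      have h3 := neg_abs_le (R t (Measure.dirac (-C)))
      have h4 := le_abs_self (R t (Measure.dirac C))
      have h5 := abs_nonneg (R t (Measure.dirac (-C)))
      have h6 := abs_nonneg (R t (Measure.dirac C))
      rw [abs_le]
      constructor
      · refine le_min ?_ ?_ <;> linarith
      · exact (min_le_left _ _).trans (by linarith)
  have hLdec : ∀ k t, t + k + 1 = T → Antitone (L t) := by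
    intro k
    induction k with
    | zero =>
      intro t ht
      have htT : t < T := by omega
      have hvs : v (t + 1) = s (t + 1) := by
        obtain rfl : t + 1 = T := by omega
        exact funext hvT
      have : L t = M t := by
        funext x
        rw [hL t htT, hM t htT, hvs]
      rw [this]
      exact hMdec t htT
    | succ k ih =>
      intro t ht
      have htT : t < T := by omega
      have ht1 : t + 1 < T := by omega
      have ih' := ih (t + 1) (by omega)
      obtain ⟨hsm, A, hA⟩ := hs (t + 1) ht1.le
      obtain ⟨hvm, B, hB⟩ := hv (k + 1) (t + 1) (by omega)
      -- The increment `v_{t+1} - s_{t+1}` equals `min(0, L_{t+1})`, hence is decreasing.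
      have hg : (fun x => v (t + 1) x - s (t + 1) x) = fun x => min 0 (L (t + 1) x) := by
        funext x
        rw [hrec (t + 1) ht1, hL (t + 1) ht1, ← min_sub_sub_right, sub_self]
        congr 1
        ring
      have hga : Antitone (fun x => v (t + 1) x - s (t + 1) x) := by
        rw [hg]
        exact fun a b hab => min_le_min le_rfl (ih' hab)
      have hgm : Measurable (fun x => v (t + 1) x - s (t + 1) x) := hvm.sub hsm
      have hgb : IsBddFun (fun x => v (t + 1) x - s (t + 1) x) :=
        ⟨B + A, fun x => (abs_sub _ _).trans (add_le_add (hB x) (hA x))⟩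
      have hsa := hsdec (t + 1) ht1
      have hdecomp : ∀ x, L t x = M t x +
          R t (Measure.map (fun y => v (t + 1) y - s (t + 1) y) (Q t x)) := by
        intro x
        obtain ⟨S, hS, hS1, hSc⟩ := hchain t htT x
        have hadd := hRcomadd t htT (Q t x) (hQprob t htT x) (s (t + 1)) _ hsm hgm
          ⟨A, hA⟩ hgb S hS hS1 (by
            intro y hy y' hy'
            rcases hSc y hy y' hy' with h | h
            · exact mul_nonneg (sub_nonneg.2 (hsa h)) (sub_nonneg.2 (hga h))
            · exact mul_nonneg_of_nonpos_of_nonpos (sub_nonpos.2 (hsa h))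
                (sub_nonpos.2 (hga h)))
        simp only [add_sub_cancel] at hadd
        rw [hL t htT, hM t htT, hadd]
        ring
      intro x x' hxx
      have := hQprob t htT x
      have := hQprob t htT x'
      rw [hdecomp, hdecomp]
      exact add_le_add (hMdec t htT hxx)
        (risk_antitone (hRmono t htT) (hQmono t htT x x' hxx) hgm hga)
  have hLa : ∀ t, t < T → Antitone (L t) := fun t ht => hLdec (T - t - 1) t (by omega)
  refine ⟨hLa, fun t ht i x0 => ?_⟩
  refine ⟨sInf {a : EReal | ∃ y : X, SameOff i y x0 ∧ L t y ≤ 0 ∧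
    a = ((y : Fin n → ℝ) i : EReal)}, fun x hx => ⟨fun h => ?_, fun h => ?_⟩⟩
  · obtain ⟨a, ⟨y, hy, hyL, rfl⟩, hlt⟩ := sInf_lt_iff.1 h
    refine (hLa t ht (?_ : y ≤ x)).trans hyL
    intro j
    by_cases hj : j = i
    · subst hj
      exact (EReal.coe_lt_coe_iff.1 hlt).le
    · exact ((hy j hj).trans (hx j hj).symm).le
  · by_contra hn
    exact absurd h (not_lt.2 (sInf_le ⟨x, hx, not_lt.1 hn, rfl⟩))
end

section
/- In the finite-horizon risk-averse optimal stopping model, suppose each one-step risk functional R_t is a.e.-monotone, translation-invariant, positively homogeneous, and subadditive, and suppose that for every t < T−1 and every x ∈ X, M_t(x) ≥ 0 implies M_{t+1}(y) ≥ 0 for Q_t(·|x)-almost every y. Then for every t < T and every x ∈ X: (i) L_t(x) ≤ M_t(x); (ii) if M_t(x) ≥ 0 then L_t(x) = M_t(x); consequently L_t(x) ≤ 0 if and only if M_t(x) ≤ 0, so the one-step look-ahead policy (stop exactly when M_t(x) ≥ 0) is optimal. -/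
/-!
Since `v_{t+1} ≤ s_{t+1}`, monotonicity of `R_t` gives `L_t ≤ M_t`. For the reverse inequality on
`{M_t ≥ 0}`, argue backwards in time: at `t = T - 1` one has `v_T = s_T`; otherwise `M_t(x) ≥ 0`
propagates to `M_{t+1} ≥ 0` almost everywhere, where inductively `L_{t+1} = M_{t+1} ≥ 0`, so stopping
is optimal and `v_{t+1} = s_{t+1}` almost everywhere. Both pushforwards, and hence both
risks, then coincide. Using monotonicity requires the value functions to be bounded and measurable;
boundedness rests on `abs_risk_le`.
-/

open MeasureTheory

/-- `R` is a.e.-monotone: `ρ_μ(f) ≤ ρ_μ(g)` whenever `f ≤ g` `μ`-a.e. -/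
def AEMonotone (α : Type*) [MeasurableSpace α] (R : Measure ℝ → ℝ) : Prop :=
  ∀ μ : Measure α, IsProbabilityMeasure μ → ∀ f g : α → ℝ,
    Measurable f → Measurable g → IsBddFun f → IsBddFun g →
    (∀ᵐ x ∂μ, f x ≤ g x) → R (Measure.map f μ) ≤ R (Measure.map g μ)

/-- `R` is translation-invariant: `R((z ↦ z + c)_♯μ) = R(μ) + c`. -/
def TranslationInv (R : Measure ℝ → ℝ) : Prop :=
  ∀ μ : Measure ℝ, IsProbabilityMeasure μ → ∀ c : ℝ,
    R (Measure.map (fun z => z + c) μ) = R μ + c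

/-- `R` is positively homogeneous: `R((z ↦ λ z)_♯μ) = λ R(μ)` for `λ ≥ 0`. -/
def PosHomog (R : Measure ℝ → ℝ) : Prop :=
  ∀ μ : Measure ℝ, IsProbabilityMeasure μ → ∀ l : ℝ, 0 ≤ l →
    R (Measure.map (fun z => l * z) μ) = l * R μ

/-- `R` is subadditive: `ρ_μ(f + g) ≤ ρ_μ(f) + ρ_μ(g)`. -/
def SubadditiveRisk (α : Type*) [MeasurableSpace α] (R : Measure ℝ → ℝ) : Prop :=
  ∀ μ : Measure α, IsProbabilityMeasure μ → ∀ f g : α → ℝ,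
    Measurable f → Measurable g → IsBddFun f → IsBddFun g →
    R (Measure.map (fun x => f x + g x) μ) ≤ R (Measure.map f μ) + R (Measure.map g μ)

/-- A normalised monotone risk functional is bounded by the sup norm: homogeneity with factor `0` and
translation invariance force the risk of a constant to be that constant. -/
lemma abs_risk_le {α : Type*} [MeasurableSpace α] {R : Measure ℝ → ℝ}
    (hmono : AEMonotone α R) (htrans : TranslationInv R) (hhomog : PosHomog R)
    (μ : Measure α) (hμ : IsProbabilityMeasure μ) {f : α → ℝ} (hf : Measurable f)
    {C : ℝ} (hC : ∀ x, |f x| ≤ C) : |R (Measure.map f μ)| ≤ C := by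
  have hconst : ∀ a : ℝ, R (Measure.map (fun _ : α => a) μ) = a := by
    intro a
    have hp : IsProbabilityMeasure (Measure.map f μ) :=
      Measure.isProbabilityMeasure_map hf.aemeasurable
    have h0 := hhomog _ hp 0 le_rfl
    rw [Measure.map_map (by fun_prop) hf] at h0
    have hp0 : IsProbabilityMeasure (Measure.map ((fun z : ℝ => 0 * z) ∘ f) μ) :=
      Measure.isProbabilityMeasure_map (by fun_prop)
    have h1 := htrans _ hp0 a
    rw [h0, Measure.map_map (by fun_prop) (by fun_prop)] at h1
    have he : ((fun z : ℝ => z + a) ∘ (fun z : ℝ => 0 * z) ∘ f) = fun _ => a := by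
      funext x; simp
    rw [he] at h1
    linarith
  have hbc : ∀ a : ℝ, IsBddFun (fun _ : α => a) := fun a => ⟨|a|, fun _ => le_rfl⟩
  have hup := hmono μ hμ f (fun _ => C) hf measurable_const ⟨C, hC⟩ (hbc C)
    (ae_of_all _ fun x => (abs_le.1 (hC x)).2)
  have hlo := hmono μ hμ (fun _ => -C) f measurable_const hf (hbc (-C)) ⟨C, hC⟩
    (ae_of_all _ fun x => (abs_le.1 (hC x)).1)
  rw [hconst] at hup hlo
  exact abs_le.2 ⟨hlo, hup⟩

/-- under coherence-type conditions on the `R_t`, if `M_t(x) ≥ 0` forces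
`M_{t+1} ≥ 0` `Q_t(·|x)`-a.s., then for every `t < T` and `x`: (i) `L_t(x) ≤ M_t(x)`;
(ii) `M_t(x) ≥ 0` implies `L_t(x) = M_t(x)`; consequently `L_t(x) ≤ 0 ↔ M_t(x) ≤ 0`,
so the one-step look-ahead policy is optimal. -/
theorem one_step_look_ahead_optimal (n T : ℕ) (X : Set (Fin n → ℝ))
    (hX : MeasurableSet X)
    (Q : ℕ → X → Measure X)
    (hQprob : ∀ t, t < T → ∀ x, IsProbabilityMeasure (Q t x))
    (s : ℕ → X → ℝ) (c : ℕ → X → ℝ)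
    (hs : ∀ t, t ≤ T → Measurable (s t) ∧ IsBddFun (s t))
    (hc : ∀ t, t < T → Measurable (c t) ∧ IsBddFun (c t))
    (R : ℕ → Measure ℝ → ℝ)
    (hRmeas : ∀ t, t < T → ∀ f : X → ℝ, Measurable f → IsBddFun f →
      Measurable fun x : X => R t (Measure.map f (Q t x)))
    (hRmono : ∀ t, t < T → AEMonotone ↥X (R t))
    (hRtrans : ∀ t, t < T → TranslationInv (R t))
    (hRhomog : ∀ t, t < T → PosHomog (R t))
    (hRsub : ∀ t, t < T → SubadditiveRisk ↥X (R t))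
    (v : ℕ → X → ℝ)
    (hvT : ∀ x, v T x = s T x)
    (hrec : ∀ t, t < T → ∀ x,
      v t x = min (s t x) (c t x + R t (Measure.map (v (t + 1)) (Q t x))))
    (L M : ℕ → X → ℝ)
    (hL : ∀ t, t < T → ∀ x,
      L t x = R t (Measure.map (v (t + 1)) (Q t x)) + c t x - s t x)
    (hM : ∀ t, t < T → ∀ x,
      M t x = R t (Measure.map (s (t + 1)) (Q t x)) + c t x - s t x)
    (hMstep : ∀ t, t + 1 < T → ∀ x : X, 0 ≤ M t x →
      ∀ᵐ y ∂(Q t x), 0 ≤ M (t + 1) y) :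
    ∀ t, t < T → ∀ x : X,
      L t x ≤ M t x ∧ (0 ≤ M t x → L t x = M t x) ∧ (L t x ≤ 0 ↔ M t x ≤ 0) := by
  have hv : ∀ k t, t + k = T → Measurable (v t) ∧ IsBddFun (v t) := by
    intro k
    induction k with
    | zero =>
      intro t ht
      obtain rfl : t = T := by omega
      rw [show v t = s t from funext hvT]
      exact hs t le_rfl
    | succ k ih =>
      intro t ht
      have htT : t < T := by omega
      obtain ⟨hm, C, hC⟩ := ih (t + 1) (by omega)
      obtain ⟨hsm, A, hA⟩ := hs t htT.le
      obtain ⟨hcm, B, hB⟩ := hc t htT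
      refine ⟨?_, A + (B + C), fun x => ?_⟩
      · rw [show v t = _ from funext (hrec t htT)]
        exact hsm.min (hcm.add (hRmeas t htT _ hm ⟨C, hC⟩))
      · have hR := abs_risk_le (hRmono t htT) (hRtrans t htT) (hRhomog t htT)
          (Q t x) (hQprob t htT x) hm hC
        have h1 := hA x
        have h2 := hB x
        have hA0 := (abs_nonneg _).trans h1
        have hB0 := (abs_nonneg _).trans h2
        have hC0 := (abs_nonneg _).trans hR
        rw [hrec t htT x]
        rw [abs_le] at *
        refine ⟨le_min ?_ ?_, (min_le_left _ _).trans ?_⟩ <;> linarith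
  have hvs : ∀ t, t ≤ T → ∀ x, v t x ≤ s t x := by
    intro t ht x
    rcases ht.lt_or_eq with h | rfl
    · rw [hrec t h x]
      exact min_le_left _ _
    · exact (hvT x).le
  have hLM : ∀ t, t < T → ∀ x, L t x ≤ M t x := by
    intro t ht x
    obtain ⟨hm, hb⟩ := hv (T - (t + 1)) (t + 1) (by omega)
    obtain ⟨hsm, hsb⟩ := hs (t + 1) ht
    have := hRmono t ht (Q t x) (hQprob t ht x) _ _ hm hsm hb hsb
      (ae_of_all _ (hvs (t + 1) ht))
    rw [hL t ht, hM t ht]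
    linarith
  have hEq : ∀ k t, t + 1 + k = T → ∀ x, 0 ≤ M t x → L t x = M t x := by
    intro k
    induction k with
    | zero =>
      intro t ht x _
      have htT : t < T := by omega
      obtain rfl : t + 1 = T := by omega
      rw [hL t htT, hM t htT, show v (t + 1) = s (t + 1) from funext hvT]
    | succ k ih =>
      intro t ht x hx
      have htT : t < T := by omega
      have ht1 : t + 1 < T := by omega
      have hae : v (t + 1) =ᵐ[Q t x] s (t + 1) := by
        filter_upwards [hMstep t ht1 x hx] with y hy
        have h1 := ih (t + 1) (by omega) y hy
        have h2 := hL (t + 1) ht1 y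
        rw [hrec (t + 1) ht1 y]
        exact min_eq_left (by linarith)
      rw [hL t htT, hM t htT, Measure.map_congr hae]
  intro t ht x
  have h1 := hLM t ht x
  have h2 := hEq (T - (t + 1)) t (by omega) x
  refine ⟨h1, h2, fun h => ?_, h1.trans⟩
  by_contra! hpos
  have := h2 hpos.le
  linarith
end

section
/- Suppose the finite-horizon risk-averse optimal stopping model is time-homogeneous: Q_t = Q, c_t = c, s_t = s (including s_T = s), and R_t = R for all t, where R is a.e.-monotone. Then: (i) v_t(x) ≤ v_{t+1}(x) for every t < T and x ∈ X; (ii) L_t(x) ≤ L_{t+1}(x) for every t < T−1 and x ∈ X; and (iii) for every coordinate i and every x_{−i}, the control limits x̄_{t,i}(x_{−i}) := inf{ ξ ∈ ℝ : L_t(x with i-th coordinate ξ) ≤ 0 } (inf ∅ := +∞) satisfy x̄_{t,i}(x_{−i}) ≤ x̄_{t+1,i}(x_{−i}), i.e., the optimal control limit is increasing in t. -/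
/-!
The value functions increase in time by backward induction: at the horizon
`v (T - 1) = min s _ ≤ s = v T`, and since the data do not depend on time, monotonicity of the
risk functional turns `v (t + 1) ≤ v (t + 2)` into an inequality between the continuation costs
at `t` and `t + 1`, hence into `v t ≤ v (t + 1)`. The same comparison of continuation costs gives
`L t ≤ L (t + 1)`, so that `{L (t + 1) ≤ 0} ⊆ {L t ≤ 0}`, and an infimum over a smaller set is
larger.
-/

open MeasureTheory

/-- The control limit in the `i`-th coordinate through the fiber of `x0`:
`inf { ξ ∈ ℝ : L(x with i-th coordinate ξ) ≤ 0 }` as an element of `[-∞,+∞]`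
(`inf ∅ = +∞`), where `x` ranges over points of `X` agreeing with `x0` off `i`. -/
noncomputable def ctrlLimit {n : ℕ} {X : Set (Fin n → ℝ)} (L : X → ℝ) (i : Fin n)
    (x0 : X) : EReal :=
  sInf {e : EReal | ∃ y : X,
    (∀ j : Fin n, j ≠ i → (y : Fin n → ℝ) j = (x0 : Fin n → ℝ) j) ∧
    L y ≤ 0 ∧ e = ((y : Fin n → ℝ) i : EReal)}

/-- in the time-homogeneous model with an a.e.-monotone risk functional,
(i) `v_t ≤ v_{t+1}`, (ii) `L_t ≤ L_{t+1}`, and (iii) the optimal control limits are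
increasing in `t`. -/
theorem monotone_in_time (n T : ℕ) (X : Set (Fin n → ℝ)) (hX : MeasurableSet X)
    (Q : X → Measure X) (hQprob : ∀ x, IsProbabilityMeasure (Q x))
    (s : X → ℝ) (c : X → ℝ)
    (hsreg : Measurable s ∧ IsBddFun s)
    (hcreg : Measurable c ∧ IsBddFun c)
    (R : Measure ℝ → ℝ)
    (hRmeas : ∀ f : X → ℝ, Measurable f → IsBddFun f →
      Measurable fun x : X => R (Measure.map f (Q x)))
    (hRmono : AEMonotone ↥X R)
    (v : ℕ → X → ℝ)
    (hvreg : ∀ t, t ≤ T → Measurable (v t) ∧ IsBddFun (v t))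
    (hvT : ∀ x, v T x = s x)
    (hrec : ∀ t, t < T → ∀ x,
      v t x = min (s x) (c x + R (Measure.map (v (t + 1)) (Q x))))
    (L : ℕ → X → ℝ)
    (hL : ∀ t, t < T → ∀ x,
      L t x = R (Measure.map (v (t + 1)) (Q x)) + c x - s x) :
    (∀ t, t < T → ∀ x : X, v t x ≤ v (t + 1) x) ∧
    (∀ t, t + 1 < T → ∀ x : X, L t x ≤ L (t + 1) x) ∧
    (∀ t, t + 1 < T → ∀ (i : Fin n) (x0 : X),
      ctrlLimit (L t) i x0 ≤ ctrlLimit (L (t + 1)) i x0) := by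
  -- Monotonicity of `R` carries an inequality of value functions through the risk step.
  have risk_le : ∀ t, t + 1 < T → (∀ x : X, v (t + 1) x ≤ v (t + 1 + 1) x) → ∀ x : X,
      R (Measure.map (v (t + 1)) (Q x)) ≤ R (Measure.map (v (t + 1 + 1)) (Q x)) := by
    intro t ht h x
    exact hRmono (Q x) (hQprob x) _ _ (hvreg (t + 1) (by omega)).1
      (hvreg (t + 1 + 1) (by omega)).1 (hvreg (t + 1) (by omega)).2
      (hvreg (t + 1 + 1) (by omega)).2 (Filter.Eventually.of_forall h)
  -- Backward induction on `t`, expressed through the number `k` of periods left after `t + 1`.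
  have value_le_aux : ∀ k t, t + 1 + k = T → ∀ x : X, v t x ≤ v (t + 1) x := by
    intro k
    induction k with
    | zero =>
      intro t ht x
      obtain rfl : t + 1 = T := by omega
      rw [hvT x, hrec t (by omega) x]
      exact min_le_left _ _
    | succ k ih =>
      intro t ht x
      rw [hrec t (by omega) x, hrec (t + 1) (by omega) x]
      have h := risk_le t (by omega) (ih (t + 1) (by omega)) x
      exact min_le_min le_rfl (by linarith)
  have value_le : ∀ t, t < T → ∀ x : X, v t x ≤ v (t + 1) x := fun t ht =>
    value_le_aux (T - (t + 1)) t (by omega)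
  have loss_le : ∀ t, t + 1 < T → ∀ x : X, L t x ≤ L (t + 1) x := by
    intro t ht x
    rw [hL t (by omega) x, hL (t + 1) ht x]
    have h := risk_le t ht (value_le (t + 1) ht) x
    linarith
  refine ⟨value_le, loss_le, fun t ht i x0 => ?_⟩
  -- The set defining the limit at `t + 1` is contained in the one at `t`.
  apply sInf_le_sInf
  rintro e ⟨y, hy, hLy, he⟩
  exact ⟨y, hy, (loss_le t ht y).trans hLy, he⟩
end

section
/- Let two families of one-step risk functionals R^1_t and R^2_t (t = 0,…,T−1) be given, both a.e.-monotone, with R^1_t(μ) ≥ R^2_t(μ) for every Borel probability measure μ on ℝ and every t (the first instance is more risk-averse). Let v^k_t and L^k_t (k = 1,2) denote the value functions and continuation losses computed with R^k_t but the same kernels Q_t and the same cost functions s_t, c_t. Then for every t and x ∈ X: v^1_t(x) ≥ v^2_t(x) and L^1_t(x) ≥ L^2_t(x); consequently, for every coordinate i and every x_{−i}, the control limits x̄^k_{t,i}(x_{−i}) := inf{ ξ ∈ ℝ : L^k_t(x with i-th coordinate ξ) ≤ 0 } (inf ∅ := +∞) satisfy x̄^1_{t,i}(x_{−i}) ≥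 x̄^2_{t,i}(x_{−i}). -/
/-!
The value functions are compared by backward induction on `t`. They agree at the horizon. If
`v2 (t + 1) ≤ v1 (t + 1)`, then monotonicity of `R2 t`, followed by `R2 t ≤ R1 t` at the law of
`v1 (t + 1)`, gives `ρ²(v2 (t + 1)) ≤ ρ¹(v1 (t + 1))`; adding the common costs yields both
`L2 t ≤ L1 t` and, after taking the minimum with `s t`, `v2 t ≤ v1 t`. The stopping region
`{L1 t ≤ 0}` is thus contained in `{L2 t ≤ 0}`, and infima along each fiber reverse inclusion.
-/

open MeasureTheory

/-- if the first family of risk functionals is more risk-averse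
(`R¹_t(μ) ≥ R²_t(μ)` for all probability measures `μ`), both families being
a.e.-monotone, then with identical kernels and costs: `v¹_t ≥ v²_t`, `L¹_t ≥ L²_t`, and
the control limits satisfy `x̄¹_{t,i} ≥ x̄²_{t,i}`. -/
theorem monotone_in_risk_aversion (n T : ℕ) (X : Set (Fin n → ℝ)) (hX : MeasurableSet X)
    (Q : ℕ → X → Measure X)
    (hQprob : ∀ t, t < T → ∀ x, IsProbabilityMeasure (Q t x))
    (s : ℕ → X → ℝ) (c : ℕ → X → ℝ)
    (hs : ∀ t, t ≤ T → Measurable (s t) ∧ IsBddFun (s t))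
    (hc : ∀ t, t < T → Measurable (c t) ∧ IsBddFun (c t))
    (R1 R2 : ℕ → Measure ℝ → ℝ)
    (hR1meas : ∀ t, t < T → ∀ f : X → ℝ, Measurable f → IsBddFun f →
      Measurable fun x : X => R1 t (Measure.map f (Q t x)))
    (hR2meas : ∀ t, t < T → ∀ f : X → ℝ, Measurable f → IsBddFun f →
      Measurable fun x : X => R2 t (Measure.map f (Q t x)))
    (hR1mono : ∀ t, t < T → AEMonotone ↥X (R1 t))
    (hR2mono : ∀ t, t < T → AEMonotone ↥X (R2 t))
    (hdom : ∀ t, t < T → ∀ μ : Measure ℝ, IsProbabilityMeasure μ → R2 t μ ≤ R1 t μ)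
    (v1 v2 : ℕ → X → ℝ)
    (hv1reg : ∀ t, t ≤ T → Measurable (v1 t) ∧ IsBddFun (v1 t))
    (hv2reg : ∀ t, t ≤ T → Measurable (v2 t) ∧ IsBddFun (v2 t))
    (hv1T : ∀ x, v1 T x = s T x) (hv2T : ∀ x, v2 T x = s T x)
    (hrec1 : ∀ t, t < T → ∀ x,
      v1 t x = min (s t x) (c t x + R1 t (Measure.map (v1 (t + 1)) (Q t x))))
    (hrec2 : ∀ t, t < T → ∀ x,
      v2 t x = min (s t x) (c t x + R2 t (Measure.map (v2 (t + 1)) (Q t x))))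
    (L1 L2 : ℕ → X → ℝ)
    (hL1 : ∀ t, t < T → ∀ x,
      L1 t x = R1 t (Measure.map (v1 (t + 1)) (Q t x)) + c t x - s t x)
    (hL2 : ∀ t, t < T → ∀ x,
      L2 t x = R2 t (Measure.map (v2 (t + 1)) (Q t x)) + c t x - s t x) :
    (∀ t, t ≤ T → ∀ x : X, v2 t x ≤ v1 t x) ∧
    (∀ t, t < T → ∀ x : X, L2 t x ≤ L1 t x) ∧
    (∀ t, t < T → ∀ (i : Fin n) (x0 : X),
      ctrlLimit (L2 t) i x0 ≤ ctrlLimit (L1 t) i x0) := by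
  -- One-step comparison: `R2(v2) ≤ R2(v1)` by monotonicity, `R2(v1) ≤ R1(v1)` by domination.
  have step : ∀ t, t < T → (∀ x : X, v2 (t + 1) x ≤ v1 (t + 1) x) → ∀ x : X,
      R2 t (Measure.map (v2 (t + 1)) (Q t x)) ≤ R1 t (Measure.map (v1 (t + 1)) (Q t x)) := by
    intro t ht hv x
    have hp := hQprob t ht x
    obtain ⟨m1, b1⟩ := hv1reg (t + 1) ht
    obtain ⟨m2, b2⟩ := hv2reg (t + 1) ht
    exact (hR2mono t ht (Q t x) hp _ _ m2 m1 b2 b1 (Filter.Eventually.of_forall hv)).trans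
      (hdom t ht _ (Measure.isProbabilityMeasure_map m1.aemeasurable))
  have hv : ∀ t, t ≤ T → ∀ x : X, v2 t x ≤ v1 t x := by
    intro t ht
    induction ht using Nat.decreasingInduction with
    | self => intro x; rw [hv1T, hv2T]
    | of_succ t ht ih =>
      intro x
      rw [hrec1 t ht, hrec2 t ht]
      exact min_le_min le_rfl (by linarith [step t ht ih x])
  have hL : ∀ t, t < T → ∀ x : X, L2 t x ≤ L1 t x := by
    intro t ht x
    rw [hL1 t ht, hL2 t ht]
    linarith [step t ht (hv (t + 1) ht) x]
  refine ⟨hv, hL, fun t ht i x0 => sInf_le_sInf ?_⟩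
  rintro e ⟨y, hy, hy0, he⟩
  exact ⟨y, hy, (hL t ht y).trans hy0, he⟩
end
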